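/- Let d ≥ 2, let μ be the uniform (normalized, rotation-invariant) probability measure on the unit sphere S = {v ∈ ℝ^d : ‖v‖ = 1}, let u ∈ ℝ^d be a fixed unit vector, and let 0 < α < 1. Then μ({v ∈ S : |⟨u, v⟩| ≥ α}) ≤ (1 − α²)^{(d−1)/2}. -/

import Mathlib

open scoped RealInnerProductSpace
open MeasureTheory

lemma aux_section (α r q : ℝ) (hr : r ^ 2 = 1 - α ^ 2) (hα0 : 0 < α) (hr0 : 0 < r) (hq : 0 ≤ q) :
    volume {s : ℝ | s ^ 2 + r ^ 2 * q ≤ 1 ∧ α ^ 2 * (s ^ 2 + r ^ 2 * q) ≤ s ^ 2} ≤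
      volume {s : ℝ | s ^ 2 + q ≤ 1} := by
  have hα : α ^ 2 = 1 - r ^ 2 := by linarith
  have hr2 : 0 < r ^ 2 := by positivity
  have key : ∀ s : ℝ, α ^ 2 * (s ^ 2 + r ^ 2 * q) ≤ s ^ 2 → α ^ 2 * q ≤ s ^ 2 := by
    intro s h
    have : r ^ 2 * (α ^ 2 * q) ≤ r ^ 2 * s ^ 2 := by nlinarith
    exact le_of_mul_le_mul_left this hr2
  by_cases hq1 : q ≤ 1
  · set a := √(1 - r ^ 2 * q) with ha
    set b := √(α ^ 2 * q) with hb
    set c := √(1 - q) with hc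
    have ha2 : a ^ 2 = 1 - r ^ 2 * q := Real.sq_sqrt (by nlinarith)
    have hb2 : b ^ 2 = α ^ 2 * q := Real.sq_sqrt (by positivity)
    have hc2 : c ^ 2 = 1 - q := Real.sq_sqrt (by linarith)
    have ha0 : 0 ≤ a := Real.sqrt_nonneg _
    have hb0 : 0 ≤ b := Real.sqrt_nonneg _
    have hc0 : 0 ≤ c := Real.sqrt_nonneg _
    have hab : b ≤ a := by
      apply Real.sqrt_le_sqrt; nlinarith
    have habc : a - b ≤ c := by
      refine (sq_le_sq₀ (by linarith) hc0).1 ?_; nlinarith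
    have hsub : {s : ℝ | s ^ 2 + r ^ 2 * q ≤ 1 ∧ α ^ 2 * (s ^ 2 + r ^ 2 * q) ≤ s ^ 2} ⊆
        Set.Icc b a ∪ Set.Icc (-a) (-b) := by
      rintro s ⟨h1, h2⟩
      have h3 := key s h2
      have h4 : |s| ≤ a := Real.abs_le_sqrt (by linarith)
      have h5 : b ≤ |s| := by
        rw [← Real.sqrt_sq_eq_abs]; exact Real.sqrt_le_sqrt h3
      rcases le_total 0 s with hs | hs
      · rw [abs_of_nonneg hs] at h4 h5
        exact Or.inl ⟨h5, h4⟩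
      · rw [abs_of_nonpos hs] at h4 h5
        exact Or.inr ⟨by linarith, by linarith⟩
    have hsup : Set.Icc (-c) c ⊆ {s : ℝ | s ^ 2 + q ≤ 1} := by
      rintro s ⟨h1, h2⟩
      have : s ^ 2 ≤ c ^ 2 := sq_le_sq' h1 h2
      simp only [Set.mem_ofPred_eq]; linarith
    refine (measure_mono hsub).trans (le_trans ?_ (measure_mono hsup))
    refine (measure_union_le _ _).trans ?_
    rw [Real.volume_Icc, Real.volume_Icc, Real.volume_Icc, ← ENNReal.ofReal_add (by linarith) (by linarith)]
    exact ENNReal.ofReal_le_ofReal (by linarith)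
  · have : {s : ℝ | s ^ 2 + r ^ 2 * q ≤ 1 ∧ α ^ 2 * (s ^ 2 + r ^ 2 * q) ≤ s ^ 2} = ∅ := by
      ext s
      simp only [Set.mem_ofPred_eq, Set.mem_empty_iff_false, iff_false, not_and]
      intro h1 h2
      have := key s h2
      nlinarith
    rw [this]; simp

lemma aux_prod (n : ℕ) (α r : ℝ) (hr : r ^ 2 = 1 - α ^ 2) (hα0 : 0 < α) (hr0 : 0 < r) :
    (volume : Measure (ℝ × (Fin n → ℝ)))
      {p | p.1 ^ 2 + ∑ i, p.2 i ^ 2 ≤ 1 ∧ α ^ 2 * (p.1 ^ 2 + ∑ i, p.2 i ^ 2) ≤ p.1 ^ 2} ≤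
    ENNReal.ofReal (r ^ n) * (volume : Measure (ℝ × (Fin n → ℝ)))
      {p | p.1 ^ 2 + ∑ i, p.2 i ^ 2 ≤ 1} := by
  have m1 : MeasurableSet {p : ℝ × (Fin n → ℝ) | p.1 ^ 2 + ∑ i, p.2 i ^ 2 ≤ 1} :=
    measurableSet_le (by fun_prop) (by fun_prop)
  have m2 : MeasurableSet {p : ℝ × (Fin n → ℝ) | p.1 ^ 2 + ∑ i, p.2 i ^ 2 ≤ 1 ∧
      α ^ 2 * (p.1 ^ 2 + ∑ i, p.2 i ^ 2) ≤ p.1 ^ 2} :=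
    m1.inter (measurableSet_le (f := fun p : ℝ × (Fin n → ℝ) => α ^ 2 * (p.1 ^ 2 + ∑ i, p.2 i ^ 2))
      (g := fun p => p.1 ^ 2) (by fun_prop) (by fun_prop))
  rw [Measure.volume_eq_prod, Measure.prod_apply_symm m1, Measure.prod_apply_symm m2]
  have hmap := Measure.map_addHaar_smul (volume : Measure (Fin n → ℝ)) hr0.ne'
  have hvol : (volume : Measure (Fin n → ℝ)) =
      ENNReal.ofReal (r ^ n) • Measure.map (r • ·) (volume : Measure (Fin n → ℝ)) := by
    rw [hmap, smul_smul, ← ENNReal.ofReal_mul (by positivity)]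
    simp only [Module.finrank_fin_fun]
    rw [abs_of_pos (by positivity), mul_inv_cancel₀ (by positivity)]
    simp
  conv_lhs => rw [hvol]
  rw [lintegral_smul_measure, lintegral_map (measurable_measure_prodMk_right m2) (by fun_prop),
    smul_eq_mul]
  refine mul_le_mul_right (lintegral_mono fun y => ?_) _
  have := aux_section α r (∑ i, y i ^ 2) hr hα0 hr0 (by positivity)
  convert this using 2
  · ext s
    simp [mul_pow, Finset.mul_sum]
  · rfl

lemma aux_ball (n : ℕ) (α r : ℝ) (hr : r ^ 2 = 1 - α ^ 2) (hα0 : 0 < α) (hr0 : 0 < r) :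
    (volume : Measure (EuclideanSpace ℝ (Fin (n+1))))
      {x | ‖x‖ ≤ 1 ∧ α * ‖x‖ ≤ |x 0|} ≤
    ENNReal.ofReal (r ^ n) * (volume : Measure (EuclideanSpace ℝ (Fin (n+1)))) {x | ‖x‖ ≤ 1} := by
  have h := aux_prod n α r hr hα0 hr0
  have mp := (volume_preserving_piFinSuccAbove (fun _ : Fin (n+1) => ℝ) 0).comp
    (EuclideanSpace.volume_preserving_symm_measurableEquiv_toLp (Fin (n+1)))
  have m1 : MeasurableSet {p : ℝ × (Fin n → ℝ) | p.1 ^ 2 + ∑ i, p.2 i ^ 2 ≤ 1} :=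
    measurableSet_le (by fun_prop) (by fun_prop)
  have m2 : MeasurableSet {p : ℝ × (Fin n → ℝ) | p.1 ^ 2 + ∑ i, p.2 i ^ 2 ≤ 1 ∧
      α ^ 2 * (p.1 ^ 2 + ∑ i, p.2 i ^ 2) ≤ p.1 ^ 2} :=
    m1.inter (measurableSet_le (f := fun p : ℝ × (Fin n → ℝ) => α ^ 2 * (p.1 ^ 2 + ∑ i, p.2 i ^ 2))
      (g := fun p => p.1 ^ 2) (by fun_prop) (by fun_prop))
  rw [← mp.measure_preimage m1.nullMeasurableSet, ← mp.measure_preimage m2.nullMeasurableSet] at h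
  have hn : ∀ x : EuclideanSpace ℝ (Fin (n+1)), x 0 ^ 2 + ∑ i : Fin n, x i.succ ^ 2 = ‖x‖ ^ 2 := by
    intro x
    rw [EuclideanSpace.real_norm_sq_eq, Fin.sum_univ_succ]
  convert h using 2
  · ext x
    have := hn x
    simp only [Set.mem_ofPred_eq, Set.mem_preimage]
    change _ ↔ (x 0 ^ 2 + ∑ i : Fin n, x i.succ ^ 2 ≤ 1 ∧ α ^ 2 * (x 0 ^ 2 + ∑ i : Fin n, x i.succ ^ 2) ≤ x 0 ^ 2)
    rw [this, ← mul_pow, sq_le_sq, abs_of_nonneg (by positivity : 0 ≤ α * ‖x‖), sq_le_one_iff₀ (norm_nonneg x)]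
  · congr 1
    ext x
    have := hn x
    simp only [Set.mem_ofPred_eq, Set.mem_preimage]
    change _ ↔ (x 0 ^ 2 + ∑ i : Fin n, x i.succ ^ 2 ≤ 1)
    rw [this, sq_le_one_iff₀ (norm_nonneg x)]

lemma aux_iso {d : ℕ} (u v : EuclideanSpace ℝ (Fin d)) (h : ‖u‖ = ‖v‖) :
    ∃ g : EuclideanSpace ℝ (Fin d) ≃ₗᵢ[ℝ] EuclideanSpace ℝ (Fin d), g u = v :=
  ⟨_, Submodule.reflection_sub h⟩

/-- If `μ` is the uniform (rotation-invariant) probability measure on the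
unit sphere of `ℝ^d` (`d ≥ 2`), `u` is a fixed unit vector, and `0 < α < 1`, then the
measure of the spherical cap `{v : ‖v‖ = 1, |⟨u,v⟩| ≥ α}` is at most
`(1 - α²)^{(d-1)/2}`. -/
theorem stmt_16 {d : ℕ} (hd : 2 ≤ d)
    (μ : Measure (EuclideanSpace ℝ (Fin d)))
    (hprob : IsProbabilityMeasure μ)
    (hsphere : μ {v : EuclideanSpace ℝ (Fin d) | ‖v‖ = 1} = 1)
    (hrot : ∀ g : EuclideanSpace ℝ (Fin d) ≃ₗᵢ[ℝ] EuclideanSpace ℝ (Fin d),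
      Measure.map (⇑g) μ = μ)
    (u : EuclideanSpace ℝ (Fin d)) (hu : ‖u‖ = 1)
    (α : ℝ) (hα0 : 0 < α) (hα1 : α < 1) :
    μ {v : EuclideanSpace ℝ (Fin d) | ‖v‖ = 1 ∧ α ≤ |⟪u, v⟫|} ≤
      ENNReal.ofReal ((1 - α ^ 2) ^ (((d : ℝ) - 1) / 2)) := by
  obtain ⟨n, rfl⟩ : ∃ n, d = n + 1 := ⟨d - 1, by omega⟩
  have hpos : 0 < 1 - α ^ 2 := by nlinarith
  set r := √(1 - α ^ 2) with hrdef
  have hr0 : 0 < r := Real.sqrt_pos.mpr hpos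
  have hr : r ^ 2 = 1 - α ^ 2 := Real.sq_sqrt hpos.le
  have hpow : (1 - α ^ 2) ^ ((((n + 1 : ℕ) : ℝ) - 1) / 2) = r ^ n := by
    rw [hrdef, Real.sqrt_eq_rpow, ← Real.rpow_natCast _ n, ← Real.rpow_mul hpos.le]
    congr 1
    push_cast; ring
  rw [hpow]
  have hball := aux_ball n α r hr hα0 hr0
  set B : Set (EuclideanSpace ℝ (Fin (n+1))) := {x | ‖x‖ ≤ 1} with hB
  have hBeq : B = Metric.closedBall 0 1 := by ext x; simp [hB]
  have hB0 : volume B ≠ 0 := by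
    rw [hBeq]; exact (Metric.measure_closedBall_pos _ _ one_pos).ne'
  have hBt : volume B ≠ ⊤ := by
    rw [hBeq]; exact measure_closedBall_lt_top.ne
  have hBm : MeasurableSet B := by rw [hBeq]; exact measurableSet_closedBall
  have hae : ∀ᵐ v ∂μ, ‖v‖ = 1 := by
    have hm : MeasurableSet {v : EuclideanSpace ℝ (Fin (n+1)) | ‖v‖ = 1} := measurableSet_eq_fun (by fun_prop) (by fun_prop)
    exact (prob_compl_eq_zero_iff hm).2 hsphere
  refine (measure_mono (μ := μ) (t := {v : EuclideanSpace ℝ (Fin (n+1)) | α ≤ |⟪u, v⟫|}) (fun v hv => hv.2)).trans ?_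
  set S : Set (EuclideanSpace ℝ (Fin (n+1)) × EuclideanSpace ℝ (Fin (n+1))) := {p | α * ‖p.1‖ ≤ |⟪p.1, p.2⟫|} with hS
  have hSm : MeasurableSet S := measurableSet_le (by fun_prop) (by fun_prop)
  have h1 : ∀ x : EuclideanSpace ℝ (Fin (n+1)), x ≠ 0 → μ {v : EuclideanSpace ℝ (Fin (n+1)) | α * ‖x‖ ≤ |⟪x, v⟫|} = μ {v : EuclideanSpace ℝ (Fin (n+1)) | α ≤ |⟪u, v⟫|} := by
    intro x hx
    have hx' : 0 < ‖x‖ := norm_pos_iff.mpr hx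
    obtain ⟨g, hg⟩ := aux_iso (‖x‖ • u) x (by rw [norm_smul, hu]; simp)
    have hm : MeasurableSet {v : EuclideanSpace ℝ (Fin (n+1)) | α * ‖x‖ ≤ |⟪x, v⟫|} :=
      measurableSet_le (by fun_prop) (by fun_prop)
    conv_lhs => rw [← hrot g]
    rw [Measure.map_apply g.continuous.measurable hm]
    congr 1
    ext v
    simp only [Set.mem_preimage, Set.mem_ofPred_eq]
    have : ⟪x, g v⟫ = ‖x‖ * ⟪u, v⟫ := by
      rw [← hg, g.inner_map_map, real_inner_smul_left, hg]
    rw [this, abs_mul, abs_of_pos hx', mul_comm, mul_le_mul_iff_right₀ hx']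
  have h2 : ∀ v : EuclideanSpace ℝ (Fin (n+1)), ‖v‖ = 1 → volume ({x : EuclideanSpace ℝ (Fin (n+1)) | α * ‖x‖ ≤ |⟪x, v⟫|} ∩ B) ≤
      ENNReal.ofReal (r ^ n) * volume B := by
    intro v hv
    obtain ⟨g, hg⟩ := aux_iso v (EuclideanSpace.single 0 1) (by rw [hv]; simp)
    refine le_trans (le_of_eq ?_) hball
    have hm : MeasurableSet {x : EuclideanSpace ℝ (Fin (n+1)) | ‖x‖ ≤ 1 ∧ α * ‖x‖ ≤ |x 0|} :=
      hBm.inter (measurableSet_le (f := fun x : EuclideanSpace ℝ (Fin (n+1)) => α * ‖x‖)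
        (g := fun x => |x 0|) (by fun_prop) (by fun_prop))
    rw [← g.measurePreserving.measure_preimage hm.nullMeasurableSet]
    congr 1
    ext x
    simp only [Set.mem_preimage, Set.mem_ofPred_eq, Set.mem_inter_iff, hB, g.norm_map]
    have : ⟪x, v⟫ = g x 0 := by
      rw [← g.inner_map_map, hg, EuclideanSpace.inner_single_right]; simp
    rw [this, and_comm]
  have hprod : ((volume : Measure (EuclideanSpace ℝ (Fin (n+1)))).restrict B).prod μ S = volume B * μ {v : EuclideanSpace ℝ (Fin (n+1)) | α ≤ |⟪u, v⟫|} := by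
    rw [Measure.prod_apply hSm]
    have : ∀ᵐ x ∂((volume : Measure (EuclideanSpace ℝ (Fin (n+1)))).restrict B), μ (Prod.mk x ⁻¹' S) = μ {v : EuclideanSpace ℝ (Fin (n+1)) | α ≤ |⟪u, v⟫|} := by
      refine ae_restrict_of_ae ?_
      have h0 : ∀ᵐ x ∂(volume : Measure (EuclideanSpace ℝ (Fin (n+1)))), x ≠ 0 := Measure.ae_ne volume 0
      filter_upwards [h0] with x hx using h1 x hx
    rw [lintegral_congr_ae this, lintegral_const, Measure.restrict_apply_univ, mul_comm]
  have : IsFiniteMeasure ((volume : Measure (EuclideanSpace ℝ (Fin (n+1)))).restrict B) := ⟨by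
    rw [Measure.restrict_apply_univ]; exact hBt.lt_top⟩
  have hprod2 : ((volume : Measure (EuclideanSpace ℝ (Fin (n+1)))).restrict B).prod μ S ≤ ENNReal.ofReal (r ^ n) * volume B := by
    rw [Measure.prod_apply_symm hSm]
    calc _ ≤ ∫⁻ v, ENNReal.ofReal (r ^ n) * volume B ∂μ := by
          apply lintegral_mono_ae
          filter_upwards [hae] with v hv
          have := h2 v hv
          rw [Measure.restrict_apply' hBm]
          exact this
      _ = _ := by simp
  rw [hprod, mul_comm] at hprod2
  exact (ENNReal.mul_le_mul_iff_left hB0 hBt).1 hprod2
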